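/- For any formula φ and any X5-interpretation ⟨H,T⟩: (i) H ⊨ φ^T₊ if and only if ⟨H,T⟩ ⊨ φ, and (ii) H ⫤ φ^T₋ if and only if ⟨H,T⟩ ⫤ φ, where φ^T₊ and φ^T₋ are the generalized Ferraris reducts. -/

import Mathlib

open scoped Classical

namespace X5Paper

/-- Explicit literals: an atom `p` or its explicit negation `∼p`. -/
inductive XLit (At : Type) : Type
  | pos : At → XLit At
  | neg : At → XLit At

/-- A set of explicit literals is consistent if it contains no atom together
with its explicit negation. -/
def Consistent {At : Type} (T : Set (XLit At)) : Prop :=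
  ∀ p : At, ¬ (XLit.pos p ∈ T ∧ XLit.neg p ∈ T)

/-- Nested expressions: ⊤, ⊥, atoms, ∧, ∨, default negation ¬, explicit negation ∼. -/
inductive NExp (At : Type) : Type
  | top : NExp At
  | bot : NExp At
  | atom : At → NExp At
  | conj : NExp At → NExp At → NExp At
  | disj : NExp At → NExp At → NExp At
  | dneg : NExp At → NExp At
  | xneg : NExp At → NExp At

variable {At : Type}

mutual
/-- Satisfaction `T ⊨ F` of a nested expression by a set of explicit literals. -/
def NExp.sat (T : Set (XLit At)) : NExp At → Prop
  | .top => True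
  | .bot => False
  | .atom p => XLit.pos p ∈ T
  | .conj F G => NExp.sat T F ∧ NExp.sat T G
  | .disj F G => NExp.sat T F ∨ NExp.sat T G
  | .dneg F => ¬ NExp.sat T F
  | .xneg F => NExp.fals T F

/-- Falsification `T ⫤ F` of a nested expression by a set of explicit literals. -/
def NExp.fals (T : Set (XLit At)) : NExp At → Prop
  | .top => False
  | .bot => True
  | .atom p => XLit.neg p ∈ T
  | .conj F G => NExp.fals T F ∨ NExp.fals T G
  | .disj F G => NExp.fals T F ∧ NExp.fals T G
  | .dneg F => NExp.sat T F
  | .xneg F => NExp.sat T F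
end

/-- The reduct `F^T` of a nested expression. -/
noncomputable def NExp.reduct (T : Set (XLit At)) : NExp At → NExp At
  | .top => .top
  | .bot => .bot
  | .atom p => .atom p
  | .conj F G => .conj (NExp.reduct T F) (NExp.reduct T G)
  | .disj F G => .disj (NExp.reduct T F) (NExp.reduct T G)
  | .dneg F => if NExp.sat T F then .bot else .top
  | .xneg F => .xneg (NExp.reduct T F)

/-- Formulas: atoms, ⊥, ∧, ∨, →, explicit negation ∼. -/
inductive Frm (At : Type) : Type
  | atom : At → Frm At
  | bot : Frm At
  | conj : Frm At → Frm At → Frm At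
  | disj : Frm At → Frm At → Frm At
  | impl : Frm At → Frm At → Frm At
  | xneg : Frm At → Frm At

/-- Default negation `¬φ := φ → ⊥`. -/
def Frm.neg (φ : Frm At) : Frm At := Frm.impl φ Frm.bot

/-- `⊤ := ¬⊥`. -/
def Frm.top : Frm At := Frm.neg Frm.bot

/-- Weak equivalence `φ ↔ ψ := (φ→ψ) ∧ (ψ→φ)`. -/
def Frm.iff (φ ψ : Frm At) : Frm At := Frm.conj (Frm.impl φ ψ) (Frm.impl ψ φ)

/-- Strong equivalence connective `φ ⇔ ψ := (φ↔ψ) ∧ (∼φ↔∼ψ)`. -/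
def Frm.siff (φ ψ : Frm At) : Frm At :=
  Frm.conj (Frm.iff φ ψ) (Frm.iff (Frm.xneg φ) (Frm.xneg ψ))

mutual
/-- X5 satisfaction `⟨H,T⟩ ⊨ φ`. -/
def Sat : Set (XLit At) → Set (XLit At) → Frm At → Prop
  | H, _, .atom p => XLit.pos p ∈ H
  | _, _, .bot => False
  | H, T, .conj φ ψ => Sat H T φ ∧ Sat H T ψ
  | H, T, .disj φ ψ => Sat H T φ ∨ Sat H T ψ
  | H, T, .impl φ ψ => (Sat H T φ → Sat H T ψ) ∧ (Sat T T φ → Sat T T ψ)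
  | H, T, .xneg φ => Fals H T φ

/-- X5 falsification `⟨H,T⟩ ⫤ φ`. -/
def Fals : Set (XLit At) → Set (XLit At) → Frm At → Prop
  | H, _, .atom p => XLit.neg p ∈ H
  | _, _, .bot => True
  | H, T, .conj φ ψ => Fals H T φ ∨ Fals H T ψ
  | H, T, .disj φ ψ => Fals H T φ ∧ Fals H T ψ
  | H, T, .impl φ ψ => Sat T T φ ∧ Fals H T ψ
  | H, T, .xneg φ => Sat H T φ
end

/-- X5 validity: satisfied by every X5-interpretation `⟨H,T⟩`. -/
def X5Valid (φ : Frm At) : Prop :=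
  ∀ H T : Set (XLit At), Consistent H → Consistent T → H ⊆ T → Sat H T φ

/-- Nested expressions viewed as formulas (`¬F := F → ⊥`, `⊤ := ¬⊥`). -/
def NExp.toFrm : NExp At → Frm At
  | .top => Frm.top
  | .bot => .bot
  | .atom p => .atom p
  | .conj F G => .conj F.toFrm G.toFrm
  | .disj F G => .disj F.toFrm G.toFrm
  | .dneg F => Frm.neg F.toFrm
  | .xneg F => .xneg F.toFrm

/-- Uniform substitution `φ[α/p]`. -/
noncomputable def Frm.subst (p : At) (α : Frm At) : Frm At → Frm At
  | .atom q => if q = p then α else .atom q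
  | .bot => .bot
  | .conj φ ψ => .conj (Frm.subst p α φ) (Frm.subst p α ψ)
  | .disj φ ψ => .disj (Frm.subst p α φ) (Frm.subst p α ψ)
  | .impl φ ψ => .impl (Frm.subst p α φ) (Frm.subst p α ψ)
  | .xneg φ => .xneg (Frm.subst p α φ)

/-- A formula contains no explicit negation. -/
def NoXneg : Frm At → Prop
  | .atom _ => True
  | .bot => True
  | .conj φ ψ => NoXneg φ ∧ NoXneg ψ
  | .disj φ ψ => NoXneg φ ∧ NoXneg ψ
  | .impl φ ψ => NoXneg φ ∧ NoXneg ψ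
  | .xneg _ => False

/-- HT satisfaction for (∼-free) formulas; the `∼` clause is a dummy. -/
def HTSat : Set At → Set At → Frm At → Prop
  | H, _, .atom p => p ∈ H
  | _, _, .bot => False
  | H, T, .conj φ ψ => HTSat H T φ ∧ HTSat H T ψ
  | H, T, .disj φ ψ => HTSat H T φ ∨ HTSat H T ψ
  | H, T, .impl φ ψ => (HTSat H T φ → HTSat H T ψ) ∧ (HTSat T T φ → HTSat T T ψ)
  | _, _, .xneg _ => False

/-- HT validity for ∼-free formulas. -/
def HTValid (φ : Frm At) : Prop :=
  ∀ H T : Set At, H ⊆ T → HTSat H T φ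

/-- Atom `p` occurs in a formula. -/
def Frm.occurs (p : At) : Frm At → Prop
  | .atom q => q = p
  | .bot => False
  | .conj φ ψ => Frm.occurs p φ ∨ Frm.occurs p ψ
  | .disj φ ψ => Frm.occurs p φ ∨ Frm.occurs p ψ
  | .impl φ ψ => Frm.occurs p φ ∨ Frm.occurs p ψ
  | .xneg φ => Frm.occurs p φ

/-- Atom `p` occurs only outside the scope of explicit negation `∼`. -/
def OutsideXneg (p : At) : Frm At → Prop
  | .atom _ => True
  | .bot => True
  | .conj φ ψ => OutsideXneg p φ ∧ OutsideXneg p ψ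
  | .disj φ ψ => OutsideXneg p φ ∧ OutsideXneg p ψ
  | .impl φ ψ => OutsideXneg p φ ∧ OutsideXneg p ψ
  | .xneg φ => ¬ Frm.occurs p φ

/-- A rule `F → G` of a program. -/
abbrev Rule (At : Type) := NExp At × NExp At

/-- `T` is a model of a program: it satisfies the head whenever it satisfies the body. -/
def NModels (T : Set (XLit At)) (Prog : Set (Rule At)) : Prop :=
  ∀ r ∈ Prog, NExp.sat T r.1 → NExp.sat T r.2

/-- The reduct `Π^T` of a program. -/
noncomputable def progReduct (T : Set (XLit At)) (Prog : Set (Rule At)) : Set (Rule At) :=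
  (fun r : Rule At => (NExp.reduct T r.1, NExp.reduct T r.2)) '' Prog

/-- `T` is an answer set of `Π`: a ⊆-minimal (consistent) model of the reduct `Π^T`. -/
def AnswerSet (Prog : Set (Rule At)) (T : Set (XLit At)) : Prop :=
  Consistent T ∧ NModels T (progReduct T Prog) ∧
    ∀ T' : Set (XLit At), Consistent T' → T' ⊆ T → NModels T' (progReduct T Prog) → T' = T

/-- The theory corresponding to a program: each rule `F → G` read as an implication. -/
def ruleTheory (Prog : Set (Rule At)) : Set (Frm At) :=
  (fun r : Rule At => Frm.impl r.1.toFrm r.2.toFrm) '' Prog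

/-- `⟨T,T⟩` is an equilibrium model of the theory `Γ`. -/
def EqModel (Γ : Set (Frm At)) (T : Set (XLit At)) : Prop :=
  Consistent T ∧ (∀ φ ∈ Γ, Sat T T φ) ∧
    ¬ ∃ H : Set (XLit At), Consistent H ∧ H ⊂ T ∧ ∀ φ ∈ Γ, Sat H T φ

mutual
/-- Generalized Ferraris reduct `φ^T₊` of a formula (a nested expression). -/
noncomputable def redPos (T : Set (XLit At)) : Frm At → NExp At
  | .atom p => if XLit.pos p ∈ T then .atom p else .bot
  | .bot => .bot
  | .conj α β => if Sat T T (Frm.conj α β) then .conj (redPos T α) (redPos T β) else .bot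
  | .disj α β => if Sat T T (Frm.disj α β) then .disj (redPos T α) (redPos T β) else .bot
  | .impl α β => if Sat T T (Frm.impl α β) then .disj (.dneg (redPos T α)) (redPos T β) else .bot
  | .xneg α => if Sat T T (Frm.xneg α) then .xneg (redNeg T α) else .bot

/-- Generalized Ferraris reduct `φ^T₋` of a formula (a nested expression). -/
noncomputable def redNeg (T : Set (XLit At)) : Frm At → NExp At
  | .atom p => if XLit.neg p ∈ T then .atom p else .top
  | .bot => .bot
  | .conj α β => if Fals T T (Frm.conj α β) then .conj (redNeg T α) (redNeg T β) else .top
  | .disj α β => if Fals T T (Frm.disj α β) then .disj (redNeg T α) (redNeg T β) else .top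
  | .impl α β => if Fals T T (Frm.impl α β) then redNeg T β else .top
  | .xneg α => if Fals T T (Frm.xneg α) then .xneg (redPos T α) else .top
end

mutual
/-- Generalized Ferraris reduct `F^T₊` of a nested expression. -/
noncomputable def nRedPos (T : Set (XLit At)) : NExp At → NExp At
  | .top => .top
  | .bot => .bot
  | .atom p => if XLit.pos p ∈ T then .atom p else .bot
  | .conj α β => if NExp.sat T (NExp.conj α β) then .conj (nRedPos T α) (nRedPos T β) else .bot
  | .disj α β => if NExp.sat T (NExp.disj α β) then .disj (nRedPos T α) (nRedPos T β) else .bot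
  | .dneg α => if NExp.sat T (NExp.dneg α) then .dneg (nRedPos T α) else .bot
  | .xneg α => if NExp.sat T (NExp.xneg α) then .xneg (nRedNeg T α) else .bot

/-- Generalized Ferraris reduct `F^T₋` of a nested expression. -/
noncomputable def nRedNeg (T : Set (XLit At)) : NExp At → NExp At
  | .top => .top
  | .bot => .bot
  | .atom p => if XLit.neg p ∈ T then .atom p else .top
  | .conj α β => if NExp.fals T (NExp.conj α β) then .conj (nRedNeg T α) (nRedNeg T β) else .top
  | .disj α β => if NExp.fals T (NExp.disj α β) then .disj (nRedNeg T α) (nRedNeg T β) else .top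
  | .dneg α => if NExp.fals T (NExp.dneg α) then .bot else .top
  | .xneg α => if NExp.fals T (NExp.xneg α) then .xneg (nRedPos T α) else .top
end

/-- The five-valued valuation `M(φ)` of `M = ⟨H,T⟩`. -/
noncomputable def val (H T : Set (XLit At)) : Frm At → ℤ
  | .atom p =>
      if XLit.pos p ∈ H then 2
      else if XLit.neg p ∈ H then -2
      else if XLit.pos p ∈ T then 1
      else if XLit.neg p ∈ T then -1
      else 0
  | .bot => -2
  | .conj φ ψ => min (val H T φ) (val H T ψ)
  | .disj φ ψ => max (val H T φ) (val H T ψ)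
  | .impl φ ψ => if val H T φ ≤ max (val H T ψ) 0 then 2 else val H T ψ
  | .xneg φ => - val H T φ

/-!
When `φ` holds at `T`, the reduct `φ^T₊` imitates `φ` connective by connective (with `¬α ∨ β` for
`α → β`); otherwise it is `⊥`. Inductively, `H ⊨ φ^T₊` thus says that `T ⊨ φ` and that the clause
of `φ` at `H` holds. Since satisfaction and falsification persist from `H` to `T`, the first
conjunct is redundant, except for `→`, where it is exactly the condition that X5 imposes at `T`.
Falsification is dual; there the conjunct `T ⫤ α → β` supplies the requirement `T ⊨ α`, which the
reduct `(α → β)^T₋ = β^T₋` no longer mentions.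
-/

theorem NExp.sat_ite_bot {H : Set (XLit At)} {P : Prop} [Decidable P] {F : NExp At} :
    NExp.sat H (if P then F else .bot) ↔ P ∧ NExp.sat H F := by
  split_ifs with hP <;> simp [hP, NExp.sat]

theorem NExp.fals_ite_top {H : Set (XLit At)} {P : Prop} [Decidable P] {F : NExp At} :
    NExp.fals H (if P then F else .top) ↔ P ∧ NExp.fals H F := by
  split_ifs with hP <;> simp [hP, NExp.fals]

section Reduct

variable {H T : Set (XLit At)}

mutual

theorem Sat.persist (hsub : H ⊆ T) : ∀ {φ : Frm At}, Sat H T φ → Sat T T φ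
  | .atom _, h => hsub h
  | .bot, h => h
  | .conj _ _, h => ⟨h.1.persist hsub, h.2.persist hsub⟩
  | .disj _ _, h => h.imp (Sat.persist hsub) (Sat.persist hsub)
  | .impl _ _, h => ⟨h.2, h.2⟩
  | .xneg _, h => Fals.persist hsub h

theorem Fals.persist (hsub : H ⊆ T) : ∀ {φ : Frm At}, Fals H T φ → Fals T T φ
  | .atom _, h => hsub h
  | .bot, h => h
  | .conj _ _, h => h.imp (Fals.persist hsub) (Fals.persist hsub)
  | .disj _ _, h => ⟨h.1.persist hsub, h.2.persist hsub⟩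
  | .impl _ _, h => ⟨h.1, h.2.persist hsub⟩
  | .xneg _, h => Sat.persist hsub h

end

theorem sat_and_sat_iff (hsub : H ⊆ T) {φ : Frm At} : Sat T T φ ∧ Sat H T φ ↔ Sat H T φ :=
  and_iff_right_of_imp (Sat.persist hsub)

theorem fals_and_fals_iff (hsub : H ⊆ T) {φ : Frm At} : Fals T T φ ∧ Fals H T φ ↔ Fals H T φ :=
  and_iff_right_of_imp (Fals.persist hsub)

theorem sat_impl_iff {φ ψ : Frm At} :
    Sat H T (.impl φ ψ) ↔ Sat T T (.impl φ ψ) ∧ (¬ Sat H T φ ∨ Sat H T ψ) := by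
  simp only [Sat, and_self, imp_iff_not_or, and_comm]

theorem fals_impl_iff (hsub : H ⊆ T) {φ ψ : Frm At} :
    Fals H T (.impl φ ψ) ↔ Fals T T (.impl φ ψ) ∧ Fals H T ψ := by
  simp only [Fals, and_assoc, fals_and_fals_iff hsub]

mutual

theorem sat_redPos_iff (hsub : H ⊆ T) : ∀ φ : Frm At, NExp.sat H (redPos T φ) ↔ Sat H T φ
  | .atom p => by
    simpa only [redPos, NExp.sat_ite_bot, NExp.sat, Sat] using
      sat_and_sat_iff hsub (φ := .atom p)
  | .bot => by simp only [redPos, NExp.sat, Sat]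
  | .conj α β => by
    rw [redPos, NExp.sat_ite_bot, NExp.sat, sat_redPos_iff hsub α, sat_redPos_iff hsub β]
    exact sat_and_sat_iff hsub
  | .disj α β => by
    rw [redPos, NExp.sat_ite_bot, NExp.sat, sat_redPos_iff hsub α, sat_redPos_iff hsub β]
    exact sat_and_sat_iff hsub
  | .impl α β => by
    rw [redPos, NExp.sat_ite_bot, NExp.sat, NExp.sat, sat_redPos_iff hsub α,
      sat_redPos_iff hsub β, ← sat_impl_iff]
  | .xneg α => by
    rw [redPos, NExp.sat_ite_bot, NExp.sat, fals_redNeg_iff hsub α]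
    exact sat_and_sat_iff hsub

theorem fals_redNeg_iff (hsub : H ⊆ T) : ∀ φ : Frm At, NExp.fals H (redNeg T φ) ↔ Fals H T φ
  | .atom p => by
    simpa only [redNeg, NExp.fals_ite_top, NExp.fals, Fals] using
      fals_and_fals_iff hsub (φ := .atom p)
  | .bot => by simp only [redNeg, NExp.fals, Fals]
  | .conj α β => by
    rw [redNeg, NExp.fals_ite_top, NExp.fals, fals_redNeg_iff hsub α, fals_redNeg_iff hsub β]
    exact fals_and_fals_iff hsub
  | .disj α β => by
    rw [redNeg, NExp.fals_ite_top, NExp.fals, fals_redNeg_iff hsub α, fals_redNeg_iff hsub β]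
    exact fals_and_fals_iff hsub
  | .impl α β => by
    rw [redNeg, NExp.fals_ite_top, fals_redNeg_iff hsub β, ← fals_impl_iff hsub]
  | .xneg α => by
    rw [redNeg, NExp.fals_ite_top, NExp.fals, sat_redPos_iff hsub α]
    exact fals_and_fals_iff hsub

end

theorem stmt8_general (hsub : H ⊆ T) (φ : Frm At) :
    (NExp.sat H (redPos T φ) ↔ Sat H T φ) ∧ (NExp.fals H (redNeg T φ) ↔ Fals H T φ) :=
  ⟨sat_redPos_iff hsub φ, fals_redNeg_iff hsub φ⟩

end Reduct

/-- for any formula `φ` and X5-interpretation `⟨H,T⟩`: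
(i) `H ⊨ φ^T₊` iff `⟨H,T⟩ ⊨ φ`; (ii) `H ⫤ φ^T₋` iff `⟨H,T⟩ ⫤ φ`. -/
theorem stmt8 (At : Type) (H T : Set (XLit At))
    (hH : Consistent H) (hT : Consistent T) (hsub : H ⊆ T) (φ : Frm At) :
    (NExp.sat H (redPos T φ) ↔ Sat H T φ) ∧
    (NExp.fals H (redNeg T φ) ↔ Fals H T φ) :=
  stmt8_general hsub φ

end X5Paper
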